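/- arXiv:1111.2901 — 2 statements merged into one kernel-verified Lean document; each statement's English description precedes it below -/
import Mathlib

section
/- Let K be a field and A a K-algebra that is semiprimary and left self-injective. If the dimension of A/Jac(A) over K is at most countable (equivalently, every simple left A-module has at most countable K-dimension), then A is quasi-Frobenius. -/
open Cardinal

/-- A ring is *semiprimary* if its Jacobson radical `J` is nilpotent
(`J ^ n = 0`, expressed elementwise: every product of `n` elements of `J` vanishes)
and the quotient ring `A / J` is a semisimple ring. -/
def IsSemiprimary (A : Type*) [Ring A] : Prop :=
  IsSemisimpleRing (RingCon.Quotient (⊥ : TwoSidedIdeal A).jacobson.ringCon) ∧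
  ∃ n : ℕ, 0 < n ∧ ∀ f : Fin n → A,
    (∀ i, f i ∈ Ideal.jacobson (⊥ : Ideal A)) → (List.ofFn f).prod = 0

/-- A ring is *quasi-Frobenius* if it is left self-injective and left artinian. -/
def IsQuasiFrobenius (A : Type*) [Ring A] : Prop :=
  Module.Injective A A ∧ IsArtinianRing A

/-!
Write `J` for the Jacobson radical of `A` and `M* = Hom_A(M, A)`.

Attach to each simple module `S` an element `e ∉ J` that annihilates all other simple modules, and
a simple left ideal `T` with `T * e ≠ 0`. Self-injectivity shows that `T` determines `S`. There are
only finitely many simple modules up to isomorphism, so each of them is isomorphic to such a `T`;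
in particular its dual is nonzero.

A direct sum of simple modules over an infinite index set `I` has dimension at most
`|I| * dim (A / J)`, while its dual, a product of nonzero spaces, has dimension at least
`|K| ^ |I|`. Since `M ↦ M*` is exact, filtering `M` by the `J ^ n * M` yields, when
`dim (A / J) < |K| ^ ℵ₀`, that `dim M < max (|K| ^ ℵ₀) (dim M*)`, and that `M` is artinian as soon
as `dim M* < |K| ^ ℵ₀`. For `M = A`, where `A* = A`, the first statement gives
`dim A < |K| ^ ℵ₀`, and the second applies.
-/

universe u v

section Conversion

variable {A : Type*}

open scoped Pointwise in
theorem pow_eq_bot_of_forall_prod_ofFn_eq_zero [Semiring A] {I : Ideal A} {n : ℕ} (hn : n ≠ 0)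
    (hI : ∀ f : Fin n → A, (∀ i, f i ∈ I) → (List.ofFn f).prod = 0) : I ^ n = ⊥ := by
  have hset : ((I : Set A) ^ n) ⊆ ((⊥ : AddSubmonoid A) : Set A) := by
    intro x hx
    obtain ⟨f, rfl⟩ := Set.mem_pow.mp hx
    exact hI (fun i ↦ f i) fun i ↦ (f i).2
  rw [← Submodule.toAddSubmonoid_inj, Submodule.pow_toAddSubmonoid I hn,
    AddSubmonoid.pow_eq_closure_pow_set]
  exact le_bot_iff.mp (AddSubmonoid.closure_le.mpr hset)

theorem IsSemiprimary.isSemiprimaryRing [Ring A] (h : IsSemiprimary A) : IsSemiprimaryRing A where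
  isSemisimpleRing := by
    have := h.1
    have hker : (⊥ : TwoSidedIdeal A).jacobson.ringCon ≤
        RingCon.ker (Ideal.Quotient.mk (Ring.jacobson A)) := by
      intro x y hxy
      rw [TwoSidedIdeal.rel_iff, TwoSidedIdeal.mem_jacobson_iff] at hxy
      rw [RingCon.ker_apply, Ideal.Quotient.eq, ← Ideal.jacobson_bot]
      simpa [Ideal.mem_jacobson_iff] using hxy
    refine (RingCon.lift _ _ hker).isSemisimpleRing_of_surjective fun y ↦ ?_
    obtain ⟨x, rfl⟩ := Ideal.Quotient.mk_surjective y
    exact ⟨x, rfl⟩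
  isNilpotent := by
    obtain ⟨n, hn, hprod⟩ := h.2
    exact ⟨n, Ideal.jacobson_bot (R := A) ▸ pow_eq_bot_of_forall_prod_ofFn_eq_zero hn.ne' hprod⟩

end Conversion

section Jacobson

variable {A : Type v} [Ring A]

theorem mem_jacobson_of_forall_exists_one_sub_mul_mul_eq_one {a : A}
    (ha : ∀ r, ∃ b, (1 - a * r) * b = 1) : a ∈ Ring.jacobson A := by
  rw [← Ideal.jacobson_bot, Ideal.mem_jacobson_iff]
  intro y
  obtain ⟨b, hb⟩ := ha (-y)
  obtain ⟨c, hc⟩ := ha (y * b)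
  have hright : (1 + a * y) * b = 1 := by simpa [sub_neg_eq_add] using hb
  have hb' : 1 - a * (y * b) = b := by
    rw [add_mul, one_mul, mul_assoc] at hright
    exact sub_eq_of_eq_add hright.symm
  have hbc : b * c = 1 := hb' ▸ hc
  have hleft : b * (1 + a * y) = 1 := left_inv_eq_right_inv hright hbc ▸ hbc
  refine ⟨1 - y * b * a, ?_⟩
  rw [Ideal.mem_bot]
  calc (1 - y * b * a) * y * a + (1 - y * b * a) - 1
      = y * a - y * (b * (1 + a * y)) * a := by noncomm_ring
    _ = 0 := by rw [hleft, mul_one, sub_self]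

theorem eq_zero_of_mul_eq_self_of_mem_jacobson {t a : A} (ha : a ∈ Ring.jacobson A)
    (hta : t * a = t) : t = 0 := by
  have hunit : ∀ x ∈ Ring.jacobson A, ∃ z, z * (1 - x) = 1 := by
    intro x hx
    rw [← Ideal.jacobson_bot, Ideal.mem_jacobson_iff] at hx
    obtain ⟨z, hz⟩ := hx (-1)
    exact ⟨z, by rw [Ideal.mem_bot] at hz; rw [← sub_eq_zero, ← hz]; noncomm_ring⟩
  obtain ⟨z, hz⟩ := hunit a ha
  obtain ⟨w, hw⟩ := hunit (-(z * a)) (neg_mem (Ideal.mul_mem_left _ z ha))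
  have hz' : 1 - -(z * a) = z := by rw [← hz]; noncomm_ring
  rw [hz'] at hw
  have hinv : (1 - a) * z = 1 := left_inv_eq_right_inv hw hz ▸ hw
  calc t = t * ((1 - a) * z) := by rw [hinv, mul_one]
    _ = (t - t * a) * z := by noncomm_ring
    _ = 0 := by rw [hta, sub_self, zero_mul]

theorem exists_isSimpleModule_smul_ne_zero {x : A} (hx : x ∉ Ring.jacobson A) :
    ∃ (W : Type v) (_ : AddCommGroup W) (_ : Module A W), IsSimpleModule A W ∧
      ∃ w : W, x • w ≠ 0 := by
  rw [Ring.jacobson_eq_sInf_isMaximal, Ideal.mem_sInf] at hx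
  push Not at hx
  obtain ⟨m, hm, hxm⟩ := hx
  refine ⟨A ⧸ m, inferInstance, inferInstance,
    isSimpleModule_iff_isCoatom.mpr (Ideal.isMaximal_def.mp hm), Submodule.Quotient.mk 1, ?_⟩
  rwa [← Submodule.Quotient.mk_smul, smul_eq_mul, mul_one, ne_eq, Submodule.Quotient.mk_eq_zero]

/-- The linear map `A ⧸ J → M` sending the class of `a` to `a • m`, where `J` is the Jacobson
radical; it exists because `J` annihilates the semisimple module `M`. -/
def quotientJacobsonToSpanSingleton {M : Type*} [AddCommGroup M] [Module A M]
    [IsSemisimpleModule A M] (m : M) : (A ⧸ Ring.jacobson A) →ₗ[A] M :=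
  (Ring.jacobson A).liftQ (LinearMap.toSpanSingleton A M m) fun _ hr ↦
    Module.mem_annihilator.mp (IsSemisimpleModule.jacobson_le_annihilator A M hr) m

theorem quotientJacobsonToSpanSingleton_surjective {U : Type*} [AddCommGroup U] [Module A U]
    [IsSimpleModule A U] {u : U} (hu : u ≠ 0) :
    Function.Surjective (quotientJacobsonToSpanSingleton (A := A) u) := fun y ↦
  let ⟨a, ha⟩ := IsSimpleModule.toSpanSingleton_surjective A hu y
  ⟨Submodule.Quotient.mk a, ha⟩

end Jacobson

section Simples

variable {R M : Type*} [Ring R] [AddCommGroup M] [Module R M]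

theorem nonempty_linearEquiv_of_isotypicComponent_eq {S S' : Submodule R M} [IsSimpleModule R S']
    [IsSimpleModule R S] (h : isotypicComponent R M S = isotypicComponent R M S') :
    Nonempty (S ≃ₗ[R] S') :=
  isIsotypicOfType_submodule_iff.mp (.isotypicComponent R M S') S (h ▸ S.le_isotypicComponent)

-- The isotypic components stand for the isomorphism classes of simple submodules; there are
-- finitely many, so a self-map of these classes is surjective as soon as it is injective.
theorem exists_linearEquiv_of_forall_linearEquiv_imp [IsNoetherian R M]
    (F : {S : Submodule R M // IsSimpleModule R S} → {S : Submodule R M // IsSimpleModule R S})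
    (hF : ∀ S S', Nonempty ((F S).1 ≃ₗ[R] (F S').1) → Nonempty (S.1 ≃ₗ[R] S'.1))
    (S : Submodule R M) [IsSimpleModule R S] : ∃ S', Nonempty (S ≃ₗ[R] (F S').1) := by
  have (S : {S : Submodule R M // IsSimpleModule R S}) : IsSimpleModule R S.1 := S.2
  let component (S : {S : Submodule R M // IsSimpleModule R S}) : isotypicComponents R M :=
    ⟨isotypicComponent R M S.1, S.1, S.2, rfl⟩
  have hrep (c : isotypicComponents R M) : ∃ S, component S = c := by
    obtain ⟨c, S, hS, rfl⟩ := c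
    exact ⟨⟨S, hS⟩, rfl⟩
  choose rep hrep using hrep
  have hinj : Function.Injective fun c ↦ component (F (rep c)) := fun c c' h ↦ by
    obtain ⟨i⟩ := hF _ _ (nonempty_linearEquiv_of_isotypicComponent_eq (congrArg Subtype.val h))
    rw [← hrep c, ← hrep c']
    exact Subtype.ext i.isotypicComponent_eq
  obtain ⟨c, hc⟩ := Finite.surjective_of_injective hinj (component ⟨S, ‹_›⟩)
  exact ⟨rep c, nonempty_linearEquiv_of_isotypicComponent_eq (congrArg Subtype.val hc).symm⟩

end Simples

section Semiprimary

variable {A : Type v} [Ring A]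

theorem isSemisimpleModule_quotient_jacobson [IsSemisimpleRing (A ⧸ Ring.jacobson A)] :
    IsSemisimpleModule A (A ⧸ Ring.jacobson A) := by
  have htorsion : Module.IsTorsionBySet A (A ⧸ Ring.jacobson A) (Ring.jacobson A) :=
    (Module.isTorsionBySet_quotient_iff _ _).mpr fun _ _ hr ↦ Ideal.mul_mem_right _ _ hr
  let _ := htorsion.module
  exact (htorsion.semilinearMap.isSemisimpleModule_iff_of_bijective Function.bijective_id).mpr
    inferInstance

theorem exists_linearEquiv_submodule_quotient_jacobson [IsSemisimpleRing (A ⧸ Ring.jacobson A)]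
    (U : Type*) [AddCommGroup U] [Module A U] [IsSimpleModule A U] :
    ∃ S : Submodule A (A ⧸ Ring.jacobson A), Nonempty (U ≃ₗ[A] S) := by
  have := isSemisimpleModule_quotient_jacobson (A := A)
  have := IsSimpleModule.nontrivial A U
  obtain ⟨u, hu⟩ := exists_ne (0 : U)
  let f := quotientJacobsonToSpanSingleton (A := A) u
  obtain ⟨S, ⟨i⟩⟩ := IsSemisimpleModule.exists_submodule_linearEquiv_quotient f.ker
  exact ⟨S, ⟨(i.trans
    (f.quotKerEquivOfSurjective (quotientJacobsonToSpanSingleton_surjective hu))).symm⟩⟩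

theorem exists_isSimpleModule_submodule_of_isSemiprimaryRing [IsSemiprimaryRing A]
    (M : Type*) [AddCommGroup M] [Module A M] [Nontrivial M] :
    ∃ S : Submodule A M, IsSimpleModule A S := by
  suffices h : Nontrivial M → ∃ S : Submodule A M, IsSimpleModule A S from h ‹_›
  refine IsSemiprimaryRing.induction A A M
    (P := fun M ↦ Nontrivial M → ∃ S : Submodule A M, IsSimpleModule A S) ?_ ?_
  · intro M _ _ _ _ _ _ _
    exact IsSemisimpleModule.exists_simple_submodule A M
  · intro M _ _ _ _ N hN hQ hM
    by_cases hbot : N = ⊥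
    · have i : (M ⧸ N) ≃ₗ[A] M := Submodule.quotEquivOfEqBot N hbot
      obtain ⟨S, hS⟩ := hQ i.toEquiv.nontrivial
      exact ⟨S.map i.toLinearMap, .congr (i.submoduleMap S).symm⟩
    · obtain ⟨S, hS⟩ := hN (Submodule.nontrivial_iff_ne_bot.mpr hbot)
      exact ⟨S.map N.subtype, .congr (S.equivMapOfInjective _ N.subtype_injective).symm⟩

theorem exists_isSimpleModule_le_of_isSemiprimaryRing [IsSemiprimaryRing A]
    {M : Type*} [AddCommGroup M] [Module A M] {N : Submodule A M} (hN : N ≠ ⊥) :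
    ∃ S ≤ N, IsSimpleModule A S := by
  have := Submodule.nontrivial_iff_ne_bot.mpr hN
  obtain ⟨S, hS⟩ := exists_isSimpleModule_submodule_of_isSemiprimaryRing (A := A) N
  exact ⟨S.map N.subtype, Submodule.map_subtype_le N S,
    .congr (S.equivMapOfInjective _ N.subtype_injective).symm⟩

end Semiprimary

section SelfInjective

variable {A : Type v} [Ring A] [Module.Injective A A]

theorem exists_forall_eq_mul_of_injective {X : Type*} [AddCommGroup X] [Module A X]
    {f : X →ₗ[A] A} (hf : Function.Injective f) (g : X →ₗ[A] A) : ∃ a, ∀ x, g x = f x * a := by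
  obtain ⟨h, rfl⟩ := Module.Injective.extension_property A A X A f hf g
  exact ⟨h 1, fun x ↦ by rw [LinearMap.comp_apply, ← smul_eq_mul, ← map_smul, smul_eq_mul, mul_one]⟩

theorem exists_forall_mul_mul_eq_self {T : Ideal A} [IsSimpleModule A T] {t a : A} (ht : t ∈ T)
    (hta : t * a ≠ 0) : ∃ b, ∀ x ∈ T, x * a * b = x := by
  let f : T →ₗ[A] A := LinearMap.toSpanSingleton A A a ∘ₗ T.subtype
  have hf : f ≠ 0 := fun h ↦ hta (LinearMap.congr_fun h ⟨t, ht⟩)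
  obtain ⟨b, hb⟩ := exists_forall_eq_mul_of_injective (LinearMap.injective_of_ne_zero hf) T.subtype
  exact ⟨b, fun x hx ↦ (hb ⟨x, hx⟩).symm⟩

theorem mul_eq_zero_of_mem_of_mem_jacobson {T : Ideal A} [IsSimpleModule A T] {t a : A}
    (ht : t ∈ T) (ha : a ∈ Ring.jacobson A) : t * a = 0 := by
  by_contra hta
  obtain ⟨b, hb⟩ := exists_forall_mul_mul_eq_self ht hta
  have ht0 : t = 0 := eq_zero_of_mul_eq_self_of_mem_jacobson (Ideal.mul_mem_right b _ ha)
    ((mul_assoc t a b).symm.trans (hb t ht))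
  exact hta (by rw [ht0, zero_mul])

-- If every simple left ideal kills `e`, then `x ↦ x * (1 - e * r)` has no kernel, because a simple
-- left ideal in the kernel would satisfy `t = t * e * r = 0`; self-injectivity then splits it.
theorem exists_isSimpleModule_mul_ne_zero [IsSemiprimaryRing A] {e : A}
    (he : e ∉ Ring.jacobson A) :
    ∃ T : Ideal A, IsSimpleModule A T ∧ ∃ t ∈ T, t * e ≠ 0 := by
  contrapose! he
  refine mem_jacobson_of_forall_exists_one_sub_mul_mul_eq_one fun r ↦ ?_
  let f : A →ₗ[A] A := LinearMap.toSpanSingleton A A (1 - e * r)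
  have hf : f.ker = ⊥ := by
    by_contra hker
    obtain ⟨T, hTker, hT⟩ := exists_isSimpleModule_le_of_isSemiprimaryRing hker
    refine (isSimpleModule_iff_isAtom.mp hT).1 ((Submodule.eq_bot_iff T).mpr fun t ht ↦ ?_)
    have hft : t * (1 - e * r) = 0 := hTker ht
    rwa [mul_sub, ← mul_assoc, he T hT t ht, zero_mul, sub_zero, mul_one] at hft
  obtain ⟨b, hb⟩ := exists_forall_eq_mul_of_injective (LinearMap.ker_eq_bot.mp hf) .id
  exact ⟨b, by simpa [f] using (hb 1).symm⟩

end SelfInjective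

section Kasch

variable {A : Type v} [Ring A]

/-- `e` annihilates every simple module that is not isomorphic to `U`. For simple `U` and
`e ∉ Ring.jacobson A` this plays the role of a primitive idempotent whose projective left ideal
has top `U`. -/
def IsConcentratedOn (e : A) (U : Type v) [AddCommGroup U] [Module A U] : Prop :=
  ∀ (W : Type v) [AddCommGroup W] [Module A W] [IsSimpleModule A W] (w : W),
    e • w ≠ 0 → Nonempty (W ≃ₗ[A] U)

theorem exists_isConcentratedOn (S : Submodule A (A ⧸ Ring.jacobson A)) [IsSimpleModule A S] :
    ∃ e ∉ Ring.jacobson A, IsConcentratedOn e S := by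
  have := IsSimpleModule.nontrivial A S
  obtain ⟨s, hs⟩ := exists_ne (0 : S)
  obtain ⟨e, he⟩ := Submodule.Quotient.mk_surjective _ s.1
  refine ⟨e, fun heJ ↦ hs (Subtype.ext ?_), fun W _ _ _ w hew ↦ ?_⟩
  · rw [← he, (Submodule.Quotient.mk_eq_zero _).mpr heJ, Submodule.coe_zero]
  · let f : S →ₗ[A] W := quotientJacobsonToSpanSingleton w ∘ₗ S.subtype
    have hfs : f s = e • w := congrArg (quotientJacobsonToSpanSingleton w) he.symm
    have hf : f ≠ 0 := fun h ↦ hew (by rw [← hfs, h, LinearMap.zero_apply])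
    exact ⟨(LinearEquiv.ofBijective f (LinearMap.bijective_of_ne_zero hf)).symm⟩

theorem nonempty_linearEquiv_of_isConcentratedOn [Module.Injective A A] {T T' : Ideal A}
    [IsSimpleModule A T] (i : T ≃ₗ[A] T') {e e' : A} {U U' : Type v}
    [AddCommGroup U] [Module A U] [AddCommGroup U'] [Module A U']
    (he : IsConcentratedOn e U) (he' : IsConcentratedOn e' U')
    (hT : ∃ t ∈ T, t * e ≠ 0) (hT' : ∃ t ∈ T', t * e' ≠ 0) : Nonempty (U ≃ₗ[A] U') := by
  obtain ⟨t, ht, hte⟩ := hT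
  obtain ⟨t', ht', hte'⟩ := hT'
  obtain ⟨b, hb⟩ := exists_forall_mul_mul_eq_self ht hte
  obtain ⟨a, ha⟩ := exists_forall_eq_mul_of_injective T.injective_subtype (T'.subtype ∘ₗ i)
  let x : T := i.symm ⟨t', ht'⟩
  have hxa : t' = x * a := by simpa [x] using ha x
  have hprod : (x : A) * (e * (b * (a * e'))) = t' * e' := by
    rw [← mul_assoc, ← mul_assoc, hb x x.2, ← mul_assoc, hxa]
  have hJ : e * (b * (a * e')) ∉ Ring.jacobson A := fun h ↦
    hte' (hprod ▸ mul_eq_zero_of_mem_of_mem_jacobson x.2 h)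
  obtain ⟨W, _, _, _, w, hw⟩ := exists_isSimpleModule_smul_ne_zero hJ
  simp only [mul_smul] at hw
  have hw' : e' • w ≠ 0 := fun h ↦ hw (by simp only [h, smul_zero])
  obtain ⟨iU⟩ := he W _ hw
  obtain ⟨iU'⟩ := he' W w hw'
  exact ⟨iU.symm.trans iU'⟩

-- The assignment `S ↦ T S` below sends the top of an indecomposable projective to a simple
-- submodule of its socle; being injective on isomorphism classes, it reaches every simple module.
theorem nontrivial_linearMap_of_isSimpleModule [IsSemiprimaryRing A] [Module.Injective A A]
    (U : Type*) [AddCommGroup U] [Module A U] [IsSimpleModule A U] : Nontrivial (U →ₗ[A] A) := by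
  have (S : {S : Submodule A (A ⧸ Ring.jacobson A) // IsSimpleModule A S}) : IsSimpleModule A S.1 :=
    S.2
  have := isSemisimpleModule_quotient_jacobson (A := A)
  choose e he using fun S : {S : Submodule A (A ⧸ Ring.jacobson A) // IsSimpleModule A S} ↦
    exists_isConcentratedOn S.1
  choose T hT hTe using fun S ↦ exists_isSimpleModule_mul_ne_zero (he S).1
  choose F iF using fun S ↦ exists_linearEquiv_submodule_quotient_jacobson (A := A) (T S)
  obtain ⟨S, ⟨iU⟩⟩ := exists_linearEquiv_submodule_quotient_jacobson (A := A) U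
  have : IsSimpleModule A S := .congr iU.symm
  obtain ⟨S', ⟨i⟩⟩ := exists_linearEquiv_of_forall_linearEquiv_imp
    (fun S ↦ ⟨F S, .congr (iF S).some.symm⟩)
    (fun S S' ⟨i⟩ ↦ nonempty_linearEquiv_of_isConcentratedOn
      ((iF S).some.trans (i.trans (iF S').some.symm)) (he S).2 (he S').2 (hTe S) (hTe S')) S
  let f : U →ₗ[A] A := (T S').subtype ∘ₗ (iU.trans (i.trans (iF S').some.symm)).toLinearMap
  have hf : Function.Injective f := (T S').injective_subtype.comp (LinearEquiv.injective _)
  have := IsSimpleModule.nontrivial A U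
  obtain ⟨u, hu⟩ := exists_ne (0 : U)
  exact ⟨f, 0, fun h ↦ hu (hf (by simp only [h, LinearMap.zero_apply]))⟩

end Kasch

section Rank

theorem lift_mk_power_lift_mk_le_rank_pi {K : Type u} [DivisionRing K] {ι : Type v} [Infinite ι]
    (V : ι → Type v) [∀ i, AddCommGroup (V i)] [∀ i, Module K (V i)] [∀ i, Nontrivial (V i)] :
    lift.{v} #K ^ lift.{u} #ι ≤ lift.{u} (Module.rank K (∀ i, V i)) := by
  choose x hx using fun i ↦ exists_ne (0 : V i)
  let f : (ι → K) →ₗ[K] ∀ i, V i := LinearMap.piMap fun i ↦ LinearMap.toSpanSingleton K (V i) (x i)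
  have hf : Function.Injective f :=
    Function.Injective.piMap fun i ↦ smul_left_injective K (hx i)
  have hrank := LinearMap.lift_rank_le_of_injective f hf
  rw [rank_fun_infinite, mk_arrow] at hrank
  have hlift (c : Cardinal.{v}) : lift.{max u v} c = lift.{u} c :=
    congrFun Cardinal.lift_umax.{v, u} c
  simpa [hlift] using hrank

theorem rank_dfinsupp_le {R : Type*} [Ring R] [StrongRankCondition R] {ι : Type v}
    {V : ι → Type v} [∀ i, AddCommGroup (V i)] [∀ i, Module R (V i)] [∀ i, Module.Free R (V i)]
    {δ : Cardinal.{v}} (hδ : ∀ i, Module.rank R (V i) ≤ δ) :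
    Module.rank R (Π₀ i, V i) ≤ #ι * δ := by
  classical
  calc Module.rank R (Π₀ i, V i) = Cardinal.sum fun i ↦ Module.rank R (V i) :=
        rank_directSum R V
    _ ≤ Cardinal.sum fun _ : ι ↦ δ := Cardinal.sum_le_sum _ _ hδ
    _ = #ι * δ := Cardinal.sum_const' ι δ

variable {K : Type u} [Field K] {A : Type v} [Ring A] [Algebra K A]

theorem rank_le_rank_quotient_jacobson (U : Type v) [AddCommGroup U] [Module K U] [Module A U]
    [IsScalarTower K A U] [IsSimpleModule A U] :
    Module.rank K U ≤ Module.rank K (A ⧸ Ring.jacobson A) := by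
  have := IsSimpleModule.nontrivial A U
  obtain ⟨u, hu⟩ := exists_ne (0 : U)
  exact LinearMap.rank_le_of_surjective
    ((quotientJacobsonToSpanSingleton (A := A) u).restrictScalars K)
    (quotientJacobsonToSpanSingleton_surjective hu)

theorem lift_mk_power_lift_mk_le_rank_linearMap [IsSemiprimaryRing A] [Module.Injective A A]
    {M : Type v} [AddCommGroup M] [Module A M] {ι : Type v} [Infinite ι] {V : ι → Type v}
    [∀ i, AddCommGroup (V i)] [∀ i, Module A (V i)] [∀ i, IsSimpleModule A (V i)]
    (e : M ≃ₗ[A] Π₀ i, V i) :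
    lift.{v} #K ^ lift.{u} #ι ≤ lift.{u} (Module.rank K (M →ₗ[A] A)) := by
  classical
  have (i : ι) : Nontrivial (V i →ₗ[A] A) := nontrivial_linearMap_of_isSimpleModule (V i)
  rw [← ((DFinsupp.lsum K).trans (e.symm.congrLeft A K)).rank_eq]
  exact lift_mk_power_lift_mk_le_rank_pi fun i ↦ V i →ₗ[A] A

theorem rank_linearMap_submodule_le [Module.Injective A A] {M : Type v} [AddCommGroup M]
    [Module A M] (N : Submodule A M) :
    Module.rank K (N →ₗ[A] A) ≤ Module.rank K (M →ₗ[A] A) :=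
  LinearMap.rank_le_of_surjective (LinearMap.lcomp K A N.subtype)
    (Module.Injective.extension_property A A N M N.subtype N.subtype_injective)

theorem rank_linearMap_quotient_le {M : Type v} [AddCommGroup M] [Module A M]
    (N : Submodule A M) : Module.rank K ((M ⧸ N) →ₗ[A] A) ≤ Module.rank K (M →ₗ[A] A) :=
  LinearMap.rank_le_of_injective (LinearMap.lcomp K A N.mkQ)
    (LinearMap.lcomp_injective_of_surjective N.mkQ N.mkQ_surjective)

variable [IsSemiprimaryRing A] [Module.Injective A A]

theorem lift_rank_lt_max_lift_rank_linearMap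
    (hdim : lift.{u} (Module.rank K (A ⧸ Ring.jacobson A)) < lift.{v} #K ^ ℵ₀)
    (M : Type v) [AddCommGroup M] [Module K M] [Module A M] [IsScalarTower K A M] :
    lift.{u} (Module.rank K M) <
      max (lift.{v} #K ^ ℵ₀) (lift.{u} (Module.rank K (M →ₗ[A] A))) := by
  have hK : 1 < lift.{v} #K := one_lt_lift_iff.mpr (one_lt_iff_nontrivial.mpr inferInstance)
  refine IsSemiprimaryRing.induction K A M (P := fun M ↦ lift.{u} (Module.rank K M) <
    max (lift.{v} #K ^ ℵ₀) (lift.{u} (Module.rank K (M →ₗ[A] A)))) ?_ ?_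
  · intro M _ _ _ _ _ _
    obtain ⟨s, e, _⟩ :=
      isSemisimpleModule_iff_exists_linearEquiv_dfinsupp.mp ‹IsSemisimpleModule A M›
    have hs : lift.{u} #s < max (lift.{v} #K ^ ℵ₀) (lift.{u} (Module.rank K (M →ₗ[A] A))) := by
      rcases finite_or_infinite s with _ | _
      · exact lt_max_of_lt_left ((lift_lt_aleph0.mpr mk_lt_aleph0).trans (cantor' _ hK))
      · exact lt_max_of_lt_right
          ((cantor' _ hK).trans_le (lift_mk_power_lift_mk_le_rank_linearMap e))
    rw [(e.restrictScalars K).rank_eq]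
    calc lift.{u} (Module.rank K (Π₀ m : s, m.1))
        ≤ lift.{u} (#s * Module.rank K (A ⧸ Ring.jacobson A)) :=
          lift_le.mpr (rank_dfinsupp_le fun m ↦ rank_le_rank_quotient_jacobson m.1)
      _ = lift.{u} #s * lift.{u} (Module.rank K (A ⧸ Ring.jacobson A)) := lift_mul _ _
      _ < _ := mul_lt_of_lt (le_max_of_le_left (cantor' _ hK).le) hs (lt_max_of_lt_left hdim)
  · intro M _ _ _ _ N hN hQ
    rw [← Submodule.rank_quotient_add_rank (N.restrictScalars K), lift_add]
    refine add_lt_of_lt (le_max_of_le_left (cantor' _ hK).le) (hQ.trans_le ?_) (hN.trans_le ?_)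
    · exact max_le_max_left _ (lift_le.mpr (rank_linearMap_quotient_le N))
    · exact max_le_max_left _ (lift_le.mpr (rank_linearMap_submodule_le N))

theorem isArtinian_of_lift_rank_linearMap_lt {M : Type v} [AddCommGroup M] [Module A M]
    (hM : lift.{u} (Module.rank K (M →ₗ[A] A)) < lift.{v} #K ^ ℵ₀) : IsArtinian A M := by
  suffices h : lift.{u} (Module.rank K (M →ₗ[A] A)) < lift.{v} #K ^ ℵ₀ → IsArtinian A M from h hM
  refine IsSemiprimaryRing.induction A A M
    (P := fun M ↦ lift.{u} (Module.rank K (M →ₗ[A] A)) < lift.{v} #K ^ ℵ₀ → IsArtinian A M) ?_ ?_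
  · intro M _ _ _ _ _ _ hM
    obtain ⟨s, e, _⟩ :=
      isSemisimpleModule_iff_exists_linearEquiv_dfinsupp.mp ‹IsSemisimpleModule A M›
    have : Finite s := by
      by_contra hs
      rw [not_finite_iff_infinite] at hs
      have hK : lift.{v} #K ≠ 0 := by simp
      refine hM.not_ge (le_trans ?_ (lift_mk_power_lift_mk_le_rank_linearMap e))
      exact power_le_power_left hK (aleph0_le_lift.mpr (aleph0_le_mk s))
    have : Module.Finite A M := .equiv e.symm
    exact (IsSemisimpleModule.finite_tfae.out 0 2).mp this
  · intro M _ _ _ _ N hN hQ hM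
    exact (isArtinian_iff_submodule_quotient N).mpr
      ⟨hN ((lift_le.mpr (rank_linearMap_submodule_le N)).trans_lt hM),
        hQ ((lift_le.mpr (rank_linearMap_quotient_le N)).trans_lt hM)⟩

end Rank

theorem faith_qf_of_countable_rank_semisimple_quotient_general (K : Type u) [Field K]
    (A : Type v) [Ring A] [Algebra K A] (hsp : IsSemiprimary A) (hinj : Module.Injective A A)
    (hdim : lift.{u} (Module.rank K (A ⧸ Ideal.jacobson (⊥ : Ideal A))) < lift.{v} #K ^ ℵ₀) :
    IsQuasiFrobenius A := by
  have := hsp.isSemiprimaryRing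
  rw [Ideal.jacobson_bot] at hdim
  have hA := lift_rank_lt_max_lift_rank_linearMap hdim A
  have hdual : Module.rank K (A →ₗ[A] A) = Module.rank K A :=
    (LinearMap.ringLmapEquivSelf A K A).rank_eq
  rw [hdual, lt_max_iff, or_iff_left (lt_irrefl _)] at hA
  exact ⟨hinj, isArtinian_of_lift_rank_linearMap_lt (hdual ▸ hA)⟩

/-- A semiprimary left self-injective `K`-algebra `A` such that `A / Jac(A)` has at most
countable dimension over `K` is quasi-Frobenius. -/
theorem faith_qf_of_countable_rank_semisimple_quotient
    (K : Type*) [Field K] (A : Type*) [Ring A] [Algebra K A]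
    (hsp : IsSemiprimary A) (hinj : Module.Injective A A)
    (hdim : Module.rank K (A ⧸ Ideal.jacobson (⊥ : Ideal A)) ≤ ℵ₀) :
    IsQuasiFrobenius A :=
  faith_qf_of_countable_rank_semisimple_quotient_general K A hsp hinj <|
    (lift_le_aleph0.mpr hdim).trans_lt <| cantor' _ <|
      one_lt_lift_iff.mpr (one_lt_iff_nontrivial.mpr inferInstance)
end

section
/- Let A be a left self-injective semiprimary ring. Then the right socle of A coincides with the left socle Σ of A, it is finitely generated as a right A-module, and its length as a left A-module equals its length as a right A-module. -/
universe u

open Cardinal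

/-- The socle of a module: the sum of all its simple submodules. -/
def socle (R M : Type*) [Ring R] [AddCommGroup M] [Module R M] : Submodule R M :=
  sSup {N : Submodule R M | IsSimpleModule R N}

/-- The length of a module, defined as the Krull dimension of its lattice of submodules. -/
noncomputable def moduleLength (R M : Type*) [Ring R] [AddCommGroup M] [Module R M] :
    WithBot ℕ∞ :=
  Order.krullDim (Submodule R M)

/-!
Let `J` be the Jacobson radical of `A` and `S` its left socle, the set of elements killed by `J` on
the left. Injectivity makes every map from a left ideal to `A` a right multiplication. Hence `S`
is contained in the right socle, `S * J = 0`, and every left submodule of `S` has the form `S * L`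
for a left ideal `L ⊇ J`. Nilpotency of `J` makes `S` essential as a left ideal, so `J` is exactly
the right annihilator of `S` and `L ↦ S * L` is injective on left ideals containing `J`.

The crux is that `J` is also the left annihilator of `S`. The map `I ↦ {c | c * S ⊆ S * I}` is
strictly monotone on the two-sided ideals containing `J`, which satisfy the ascending chain
condition, so it fixes `J`; its value at `J` is `{c | c * S = 0}`. Then `L ↦ rightAnnihilator L` is
an order-reversing bijection from left ideals containing `J` to right submodules of `S`, and `S` is
essential as a right ideal, so it contains the right socle. Both submodule lattices of `S` are thus
described by the finite-length lattice of left ideals containing `J`.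
-/

section Ring

variable {R : Type*} [Ring R]

lemma mul_prod_eq_zero_of_mem_pow {I : Ideal R} {n : ℕ}
    (h : ∀ l : List R, l.length = n → (∀ x ∈ l, x ∈ I) → l.prod = 0) :
    ∀ (k : ℕ) (l : List R), k + l.length = n → (∀ y ∈ l, y ∈ I) → ∀ x ∈ I ^ k, x * l.prod = 0
  | 0, l, hl, hI, x, _ => by rw [h l (by omega) hI, mul_zero]
  | k + 1, l, hl, hI, x, hx => by
    rw [Submodule.pow_succ] at hx
    induction hx using Submodule.mul_induction_on' with
    | mem_mul_mem x hx y hy =>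
      rw [mul_assoc, ← List.prod_cons]
      exact mul_prod_eq_zero_of_mem_pow h k (y :: l) (by grind)
        (List.forall_mem_cons.2 ⟨hy, hI⟩) x hx
    | add x _ y _ hx hy => rw [add_mul, hx, hy, add_zero]

lemma pow_eq_bot_of_forall_prod_eq_zero {I : Ideal R} {n : ℕ}
    (h : ∀ l : List R, l.length = n → (∀ x ∈ l, x ∈ I) → l.prod = 0) : I ^ n = ⊥ :=
  (Submodule.eq_bot_iff _).2 fun x hx ↦ by
    simpa using mul_prod_eq_zero_of_mem_pow h n [] (add_zero n) (by simp) x hx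

lemma IsSemiprimary.isSemiprimaryRing_s7 (h : IsSemiprimary R) : IsSemiprimaryRing R := by
  obtain ⟨hss, n, -, hn⟩ := h
  have hle : (⊥ : TwoSidedIdeal R).jacobson.ringCon ≤
      RingCon.ker (Ideal.Quotient.mk (Ring.jacobson R)) := fun x y hxy ↦ by
    rw [RingCon.ker_apply, Ideal.Quotient.mk_eq_mk_iff_sub_mem, ← Ideal.jacobson_bot,
      ← TwoSidedIdeal.bot_asIdeal, ← TwoSidedIdeal.asIdeal_jacobson, TwoSidedIdeal.mem_asIdeal]
    exact (TwoSidedIdeal.rel_iff _ x y).1 hxy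
  refine ⟨RingHom.isSemisimpleRing_of_surjective _
    (RingCon.lift_surjective_of_surjective hle Ideal.Quotient.mk_surjective),
    n, pow_eq_bot_of_forall_prod_eq_zero ?_⟩
  rintro l rfl hl
  rw [← Ideal.jacobson_bot] at hl
  simpa using hn l.get fun i ↦ hl _ (l.get_mem i)

lemma isUnit_one_sub_of_mem_jacobson {j : R} (hj : j ∈ Ring.jacobson R) : IsUnit (1 - j) := by
  have exists_left_inv {j : R} (hj : j ∈ Ring.jacobson R) : ∃ z, z * (1 - j) = 1 := by
    rw [← Ideal.jacobson_bot] at hj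
    obtain ⟨z, hz⟩ := Ideal.mem_jacobson_iff.1 hj (-1)
    refine ⟨z, sub_eq_zero.1 ?_⟩
    rw [← Ideal.mem_bot.1 hz]
    noncomm_ring
  obtain ⟨z, hz⟩ := exists_left_inv hj
  have hz' : z = 1 - -(z * j) := by rw [← hz]; noncomm_ring
  obtain ⟨w, hw⟩ := exists_left_inv (neg_mem (Ideal.mul_mem_left _ z hj))
  rw [← hz'] at hw
  exact ⟨⟨1 - j, z, left_inv_eq_right_inv hw hz ▸ hw, hz⟩, rfl⟩

variable [IsSemisimpleRing (R ⧸ Ring.jacobson R)]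

instance isSemisimpleModule_quotient_jacobson_s7 : IsSemisimpleModule R (R ⧸ Ring.jacobson R) :=
  (LinearMap.isSemisimpleModule_iff_of_bijective (σ := Ideal.Quotient.mk (Ring.jacobson R))
    ⟨AddHom.id _, fun _ _ ↦ rfl⟩ Function.bijective_id).2 ‹IsSemisimpleRing _›

instance wellFoundedGT_Ici_jacobson : WellFoundedGT (Set.Ici (Ring.jacobson R)) :=
  (Submodule.comapMkQRelIso (Ring.jacobson R)).symm.toOrderEmbedding.wellFoundedGT

instance wellFoundedLT_Ici_jacobson : WellFoundedLT (Set.Ici (Ring.jacobson R)) :=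
  (Submodule.comapMkQRelIso (Ring.jacobson R)).symm.toOrderEmbedding.wellFoundedLT

end Ring

lemma not_lt_map_of_strictMono {α : Type*} [Preorder α] [WellFoundedGT α] {f : α → α}
    (hf : StrictMono f) (x : α) : ¬ x < f x :=
  fun hx ↦ not_strictMono_of_wellFoundedGT _ (hf.strictMono_iterate_of_lt_map hx)

section Socle

variable {R M N : Type*} [Ring R] [AddCommGroup M] [Module R M] [AddCommGroup N] [Module R N]

instance isSemisimpleModule_socle : IsSemisimpleModule R (socle R M) := by
  rw [socle, sSup_eq_iSup]
  exact isSemisimpleModule_biSup_of_isSemisimpleModule_submodule fun T (hT : IsSimpleModule R T) ↦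
    inferInstance

lemma le_socle (T : Submodule R M) [IsSemisimpleModule R T] : T ≤ socle R M := by
  rw [← T.map_subtype_top, ← IsSemisimpleModule.sSup_simples_eq_top,
    (Submodule.gc_map_comap T.subtype).l_sSup]
  exact iSup₂_le fun U (hU : IsSimpleModule R U) ↦ le_sSup <|
    IsSimpleModule.congr (Submodule.equivMapOfInjective _ T.injective_subtype U).symm

lemma map_socle_le (f : M →ₗ[R] N) : (socle R M).map f ≤ socle R N := by
  rw [← LinearMap.range_domRestrict]
  have := IsSemisimpleModule.range (f.domRestrict (socle R M))
  exact le_socle _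

instance isTwoSided_socle : Ideal.IsTwoSided (socle R R) where
  mul_mem_of_left b ha := map_socle_le (LinearMap.toSpanSingleton R R b) ⟨_, ha, rfl⟩

lemma isSimpleModule_span_singleton_iff {x : M} :
    IsSimpleModule R (Submodule.span R {x}) ↔
      x ≠ 0 ∧ ∀ c : R, c • x ≠ 0 → ∃ d : R, d • c • x = x := by
  rw [isSimpleModule_iff_isAtom, isAtom_iff_le_of_ge, Ne, Submodule.span_singleton_eq_bot]
  refine and_congr_right fun _ ↦ ⟨fun h c hc ↦ ?_, fun h T hT hle ↦ ?_⟩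
  · exact Submodule.mem_span_singleton.1 <| h (Submodule.span R {c • x}) (by simpa using hc)
      (Submodule.span_singleton_smul_le R c x) (Submodule.mem_span_singleton_self x)
  · obtain ⟨y, hy, hy0⟩ := T.ne_bot_iff.1 hT
    obtain ⟨c, rfl⟩ := Submodule.mem_span_singleton.1 (hle hy)
    obtain ⟨d, hd⟩ := h c hy0
    exact (Submodule.span_singleton_le_iff_mem _ _).2 (hd ▸ T.smul_mem d hy)

lemma socle_induction {p : M → Prop} (zero : p 0) (add : ∀ x y, p x → p y → p (x + y))
    (simple : ∀ x, IsSimpleModule R (Submodule.span R {x}) → p x) {x : M} (hx : x ∈ socle R M) :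
    p x := by
  rw [socle, sSup_eq_iSup'] at hx
  induction hx using Submodule.iSup_induction' with
  | zero => exact zero
  | add x y _ _ hx hy => exact add x y hx hy
  | mem T x hx =>
    obtain rfl | hx0 := eq_or_ne x 0
    · exact zero
    have hT : IsAtom (T : Submodule R M) := isSimpleModule_iff_isAtom.1 T.2
    have hxT := (Submodule.span_singleton_le_iff_mem x _).2 hx
    have := (hT.le_iff_eq (by simpa using hx0)).1 hxT
    exact simple x (this ▸ T.2)

lemma mem_socle_iff [IsSemisimpleRing (R ⧸ Ring.jacobson R)] {x : M} :
    x ∈ socle R M ↔ ∀ j ∈ Ring.jacobson R, j • x = 0 := by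
  refine ⟨fun hx j hj ↦ ?_, fun hx ↦ ?_⟩
  · have := Module.mem_annihilator.1
      (IsSemisimpleModule.jacobson_le_annihilator R (socle R M) hj) ⟨x, hx⟩
    exact congrArg Subtype.val this
  · have hker : Ring.jacobson R ≤ LinearMap.ker (LinearMap.toSpanSingleton R M x) := hx
    have := IsSemisimpleModule.range (Submodule.liftQ _ _ hker)
    exact le_socle (LinearMap.range (Submodule.liftQ _ _ hker))
      ⟨Submodule.Quotient.mk 1, one_smul R x⟩

lemma eq_bot_of_disjoint_socle [IsSemiprimaryRing R] {T : Submodule R M}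
    (hT : Disjoint T (socle R M)) : T = ⊥ := by
  obtain ⟨n, hn⟩ := IsSemiprimaryRing.isNilpotent (R := R)
  have eq_bot (k : ℕ) : Ring.jacobson R ^ k • T = ⊥ → T = ⊥ := by
    induction k with
    | zero => rw [Submodule.pow_zero, Ideal.one_eq_top, Submodule.top_smul]; exact id
    | succ k ih =>
      refine fun h ↦ ih <| (hT.mono_left Submodule.smul_le_right).eq_bot_of_le fun x hx ↦ ?_
      rw [Ideal.IsTwoSided.pow_succ, Submodule.mul_smul] at h
      exact mem_socle_iff.2 fun j hj ↦
        (Submodule.eq_bot_iff _).1 h _ (Submodule.smul_mem_smul hj hx)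
  exact eq_bot n (by rw [hn, Submodule.zero_eq_bot, Submodule.bot_smul])

lemma moduleLength_coe (T : Submodule R M) : moduleLength R T = Order.krullDim (Set.Iic T) :=
  Order.krullDim_eq_of_orderIso (Submodule.mapIic T)

lemma fg_of_wellFoundedGT_Iic (T : Submodule R M) [WellFoundedGT (Set.Iic T)] : T.FG :=
  have : WellFoundedGT (Submodule R T) := (Submodule.mapIic T).toOrderEmbedding.wellFoundedGT
  have : IsNoetherian R T := isNoetherian_iff'.2 this
  Module.Finite.iff_fg.1 inferInstance

end Socle

section Baer

variable {R Q : Type*} [Ring R] [AddCommGroup Q] [Module R Q]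

lemma exists_forall_eq_smul_of_baer (hQ : Module.Baer R Q) {I : Ideal R} (f : I →ₗ[R] Q) :
    ∃ q : Q, ∀ x : I, f x = (x : R) • q := by
  obtain ⟨g, hg⟩ := hQ I f
  exact ⟨g 1, fun x ↦ by rw [← hg x x.2, ← map_smul, smul_eq_mul, mul_one]⟩

lemma exists_smul_eq_of_baer (hQ : Module.Baer R Q) {x : R} {y : Q}
    (h : ∀ c : R, c * x = 0 → c • y = 0) : ∃ q : Q, x • q = y := by
  let f := LinearPMap.mkSpanSingleton' (σ := RingHom.id R) x y h
  obtain ⟨q, hq⟩ := exists_forall_eq_smul_of_baer hQ f.toFun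
  have hx : x ∈ f.domain := Submodule.mem_span_singleton_self x
  exact ⟨q, (hq ⟨x, hx⟩).symm.trans (LinearPMap.mkSpanSingleton'_apply_self x y h hx)⟩

end Baer

section Annihilator

variable {A : Type*} [Ring A]

/-- The left annihilator `{c | c * X = 0}` of a subset of a ring. -/
def leftAnnihilator (X : Set A) : Ideal A where
  carrier := {c | ∀ x ∈ X, c * x = 0}
  zero_mem' x _ := zero_mul x
  add_mem' ha hb x hx := by rw [add_mul, ha x hx, hb x hx, add_zero]
  smul_mem' c a ha x hx := by rw [smul_eq_mul, mul_assoc, ha x hx, mul_zero]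

/-- The right annihilator `{y | X * y = 0}` of a subset of a ring, as a right ideal. -/
def rightAnnihilator (X : Set A) : Submodule Aᵐᵒᵖ A where
  carrier := {y | ∀ x ∈ X, x * y = 0}
  zero_mem' x _ := mul_zero x
  add_mem' ha hb x hx := by rw [mul_add, ha x hx, hb x hx, add_zero]
  smul_mem' c a ha x hx := by
    rw [mul_smul_comm, ha x hx, smul_zero]

end Annihilator

section Idempotent

lemma exists_mem_forall_map_mul_eq {A B : Type*} [Ring A] [Ring B] [IsSemisimpleRing B]
    {φ : A →+* B} (hφ : Function.Surjective φ) (L : Ideal A) :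
    ∃ e ∈ L, ∀ a ∈ L, φ (a * e) = φ a := by
  obtain ⟨u, hu, hspan⟩ := IsSemisimpleRing.ideal_eq_span_idempotent (L.map φ)
  have hmem : u ∈ L.map φ := hspan ▸ Ideal.mem_span_singleton_self u
  obtain ⟨e, he, rfl⟩ := (Ideal.mem_map_iff_of_surjective φ hφ).1 hmem
  refine ⟨e, he, fun a ha ↦ ?_⟩
  obtain ⟨c, hc⟩ := Ideal.mem_span_singleton'.1 (hspan ▸ Ideal.mem_map_of_mem φ ha)
  rw [map_mul, ← hc, mul_assoc, hu.eq]

variable {A : Type*} [Ring A] [IsSemisimpleRing (A ⧸ Ring.jacobson A)]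

lemma exists_mem_forall_mul_one_sub_mem_jacobson (L : Ideal A) :
    ∃ e ∈ L, ∀ a ∈ L, a * (1 - e) ∈ Ring.jacobson A := by
  obtain ⟨e, he, h⟩ := exists_mem_forall_map_mul_eq
    (Ideal.Quotient.mk_surjective (I := Ring.jacobson A)) L
  refine ⟨e, he, fun a ha ↦ ?_⟩
  rw [mul_sub, mul_one, ← Ideal.Quotient.mk_eq_mk_iff_sub_mem, h a ha]

lemma exists_op_mem_forall_one_sub_mul_mem_jacobson (L : Ideal Aᵐᵒᵖ) :
    ∃ e : A, MulOpposite.op e ∈ L ∧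
      ∀ a : A, MulOpposite.op a ∈ L → (1 - e) * a ∈ Ring.jacobson A := by
  obtain ⟨e, he, h⟩ := exists_mem_forall_map_mul_eq
    (φ := (Ideal.Quotient.mk (Ring.jacobson A)).op)
    (fun y ↦ by
      obtain ⟨x, hx⟩ := Ideal.Quotient.mk_surjective y.unop
      exact ⟨MulOpposite.op x, MulOpposite.unop_injective hx⟩) L
  refine ⟨e.unop, he, fun a ha ↦ ?_⟩
  rw [sub_mul, one_mul, ← Ideal.Quotient.mk_eq_mk_iff_sub_mem]
  exact (MulOpposite.op_injective (h _ ha)).symm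

end Idempotent

section SelfInjective

variable {A : Type*} [Ring A]

lemma isSimpleModule_span_op_singleton (hA : Module.Baer A A) {x : A}
    (hx : IsSimpleModule A (Submodule.span A {x})) :
    IsSimpleModule Aᵐᵒᵖ (Submodule.span Aᵐᵒᵖ {x}) := by
  rw [isSimpleModule_span_singleton_iff] at hx ⊢
  refine ⟨hx.1, fun a ha ↦ ?_⟩
  obtain ⟨b, hb⟩ := exists_smul_eq_of_baer hA (x := a • x) (y := x) fun c hc ↦ by
    by_contra hcx
    obtain ⟨d, hd⟩ := hx.2 c hcx
    exact ha (by rw [← hd, ← smul_comm d, ← smul_comm c, smul_eq_mul c, hc, smul_zero])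
  exact ⟨MulOpposite.op b, hb⟩

lemma mem_socle_op_of_mem_socle (hA : Module.Baer A A) {x : A} (hx : x ∈ socle A A) :
    x ∈ socle Aᵐᵒᵖ A :=
  socle_induction (zero_mem _) (fun _ _ ↦ add_mem)
    (fun y hy ↦ le_sSup (a := Submodule.span Aᵐᵒᵖ {y}) (isSimpleModule_span_op_singleton hA hy)
      (Submodule.mem_span_singleton_self y)) hx

lemma mul_eq_zero_of_mem_socle_of_mem_jacobson (hA : Module.Baer A A) {s j : A}
    (hs : s ∈ socle A A) (hj : j ∈ Ring.jacobson A) : s * j = 0 := by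
  refine socle_induction (p := fun s ↦ s * j = 0) (zero_mul j)
    (fun x y hx hy ↦ by rw [add_mul, hx, hy, add_zero]) (fun x hx ↦ ?_) hs
  have hflip := isSimpleModule_span_singleton_iff.1 (isSimpleModule_span_op_singleton hA hx)
  by_contra hne
  obtain ⟨b, hb⟩ := hflip.2 (MulOpposite.op j) hne
  have hunit : IsUnit (1 - j * b.unop) :=
    isUnit_one_sub_of_mem_jacobson (Ideal.mul_mem_right _ _ hj)
  refine hflip.1 (hunit.mul_left_eq_zero.1 ?_)
  rw [mul_sub, mul_one, ← mul_assoc, sub_eq_zero]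
  exact hb.symm

lemma exists_left_projection (hA : Module.Baer A A) {T : Ideal A} (hT : T ≤ socle A A) :
    ∃ e : A, (∀ s ∈ socle A A, s * e ∈ T) ∧ ∀ x ∈ T, x * e = x := by
  obtain ⟨K, hK⟩ := exists_isCompl (T.submoduleOf (socle A A))
  obtain ⟨e, he⟩ := exists_forall_eq_smul_of_baer hA
    ((socle A A).subtype ∘ₗ Submodule.projection _ _ hK)
  refine ⟨e, fun s hs ↦ ?_, fun x hx ↦ ?_⟩
  · rw [← smul_eq_mul, ← he ⟨s, hs⟩]
    exact Submodule.projection_apply_mem hK ⟨s, hs⟩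
  · refine (he ⟨x, hT hx⟩).symm.trans ?_
    exact congrArg Subtype.val
      (Submodule.projection_apply_left hK ⟨⟨x, hT hx⟩, hx⟩)

variable [IsSemisimpleRing (A ⧸ Ring.jacobson A)]

lemma exists_mul_eq_self_forall_exists_mul_eq (hA : Module.Baer A A) (x : A) :
    ∃ f : A, f * x = x ∧ ∀ s ∈ socle A A, ∃ a, x * a = f * s := by
  obtain ⟨e, he, h⟩ := exists_mem_forall_mul_one_sub_mem_jacobson (leftAnnihilator {x})
  refine ⟨1 - e, by rw [sub_mul, one_mul, he x rfl, sub_zero], fun s hs ↦ ?_⟩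
  refine exists_smul_eq_of_baer hA fun c hc ↦ ?_
  rw [smul_eq_mul, ← mul_assoc]
  exact mem_socle_iff.1 hs _ (h c fun y hy ↦ hy ▸ hc)

lemma exists_right_projection (hA : Module.Baer A A) {T : Submodule Aᵐᵒᵖ A}
    (hT : ∀ x ∈ T, x ∈ socle A A) :
    ∃ e : A, (∀ s ∈ socle A A, e * s ∈ T) ∧ ∀ x ∈ T, e * x = x := by
  let I : Ideal Aᵐᵒᵖ :=
    { carrier := {f | ∀ s ∈ socle A A, f.unop * s ∈ T}
      zero_mem' := fun s _ ↦ by simp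
      add_mem' := fun hf hg s hs ↦ by simpa [add_mul] using add_mem (hf s hs) (hg s hs)
      smul_mem' := fun c f hf s hs ↦ by
        simpa [mul_assoc] using hf _ (Ideal.mul_mem_left _ c.unop hs) }
  obtain ⟨e, he, h⟩ := exists_op_mem_forall_one_sub_mul_mem_jacobson I
  refine ⟨e, he, fun x hx ↦ ?_⟩
  obtain ⟨f, hf, hfS⟩ := exists_mul_eq_self_forall_exists_mul_eq hA x
  have hfI : MulOpposite.op f ∈ I := fun s hs ↦ by
    obtain ⟨a, ha⟩ := hfS s hs
    exact ha ▸ T.smul_mem (MulOpposite.op a) hx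
  have : (1 - e) * x = 0 := by
    rw [← hf, ← mul_assoc]
    exact mem_socle_iff.1 (hT x hx) _ (h f hfI)
  rwa [sub_mul, one_mul, sub_eq_zero, eq_comm] at this

lemma rightAnnihilator_leftAnnihilator (hA : Module.Baer A A) {T : Submodule Aᵐᵒᵖ A}
    (hT : ∀ x ∈ T, x ∈ socle A A) :
    rightAnnihilator (leftAnnihilator (T : Set A) : Set A) = T := by
  refine le_antisymm (fun y hy ↦ ?_) fun x hx c hc ↦ hc x hx
  obtain ⟨e, heT, he⟩ := exists_right_projection hA hT
  have hyS : y ∈ socle A A :=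
    mem_socle_iff.2 fun j hj ↦ hy j fun x hx ↦ mem_socle_iff.1 (hT x hx) j hj
  have hye : (1 - e) * y = 0 := hy _ fun x hx ↦ by rw [sub_mul, one_mul, he x hx, sub_self]
  rw [sub_mul, one_mul, sub_eq_zero] at hye
  exact hye ▸ heT y hyS

end SelfInjective

section PseudoFrobenius

variable {A : Type*} [Ring A] [IsSemisimpleRing (A ⧸ Ring.jacobson A)]

lemma mem_rightAnnihilator_socle (hA : Module.Baer A A)
    (hess : ∀ I : Ideal A, Disjoint I (socle A A) → I = ⊥) {b : A} :
    b ∈ rightAnnihilator (socle A A : Set A) ↔ b ∈ Ring.jacobson A := by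
  refine ⟨fun hb ↦ ?_, fun hb s hs ↦ mul_eq_zero_of_mem_socle_of_mem_jacobson hA hs hb⟩
  obtain ⟨e, he, h⟩ := exists_mem_forall_mul_one_sub_mem_jacobson (Ideal.span {b})
  obtain ⟨c, rfl⟩ := Ideal.mem_span_singleton'.1 he
  have hbot : leftAnnihilator {1 - c * b} = ⊥ := by
    refine hess _ (Submodule.disjoint_def.2 fun x hx hxS ↦ ?_)
    have hxb : x * c * b = 0 := hb _ (Ideal.mul_mem_right c _ hxS)
    simpa [mul_sub, ← mul_assoc, hxb] using hx _ rfl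
  obtain ⟨d, hd⟩ : ∃ d, (1 - c * b) * d = 1 := exists_smul_eq_of_baer hA fun x hx ↦ by
    have : x ∈ leftAnnihilator {1 - c * b} := fun y hy ↦ hy ▸ hx
    rw [hbot, Ideal.mem_bot] at this
    rw [this, zero_smul]
  rw [← mul_one b, ← hd, ← mul_assoc]
  exact Ideal.mul_mem_right d _ (h b (Ideal.mem_span_singleton_self b))

lemma le_of_socle_mul_le (hA : Module.Baer A A)
    (hess : ∀ I : Ideal A, Disjoint I (socle A A) → I = ⊥) {L L' : Ideal A}
    (hL' : Ring.jacobson A ≤ L')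
    (h : socle A A * L ≤ socle A A * L') : L ≤ L' := by
  intro a ha
  obtain ⟨e, he, hLe⟩ := exists_mem_forall_mul_one_sub_mem_jacobson L'
  have hle : socle A A * L' ≤ leftAnnihilator {1 - e} := Ideal.mul_le.2 fun s hs x hx y hy ↦ by
    rw [Set.mem_singleton_iff.1 hy, mul_assoc]
    exact mul_eq_zero_of_mem_socle_of_mem_jacobson hA hs (hLe x hx)
  have hmem : a * (1 - e) ∈ Ring.jacobson A :=
    (mem_rightAnnihilator_socle hA hess).1 fun s hs ↦ by
      rw [← mul_assoc]
      exact hle (h (Ideal.mul_mem_mul hs ha)) _ rfl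
  rw [show a = a * (1 - e) + a * e by noncomm_ring]
  exact add_mem (hL' hmem) (L'.mul_mem_left a he)

lemma le_of_socle_mul_colon_socle_le (hA : Module.Baer A A)
    (hess : ∀ I : Ideal A, Disjoint I (socle A A) → I = ⊥) {I I' : Ideal A} [I'.IsTwoSided]
    (hI : Ring.jacobson A ≤ I)
    (h : (socle A A * I').colon (socle A A) ≤ (socle A A * I).colon (socle A A)) : I' ≤ I := by
  refine le_of_socle_mul_le hA hess hI fun x hx ↦ ?_
  have hxS : x ∈ socle A A := Ideal.mul_le_left hx
  obtain ⟨f, hf, hfS⟩ := exists_mul_eq_self_forall_exists_mul_eq hA x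
  have hfmem : f ∈ (socle A A * I').colon (socle A A) := Submodule.mem_colon.2 fun s hs ↦ by
    obtain ⟨a, ha⟩ := hfS s hs
    rw [smul_eq_mul, ← ha]
    exact Ideal.mul_mem_right a _ hx
  rw [← hf]
  exact Submodule.mem_colon.1 (h hfmem) x hxS

lemma leftAnnihilator_socle (hA : Module.Baer A A)
    (hess : ∀ I : Ideal A, Disjoint I (socle A A) → I = ⊥) :
    leftAnnihilator (socle A A : Set A) = Ring.jacobson A := by
  let P := {I : Set.Ici (Ring.jacobson A) // (I : Ideal A).IsTwoSided}
  have : WellFoundedGT P := (OrderEmbedding.subtype _).wellFoundedGT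
  have jacobson_le_colon (I : Ideal A) :
      Ring.jacobson A ≤ (socle A A * I).colon (socle A A) := fun j hj ↦
    Submodule.mem_colon.2 fun s hs ↦ by rw [mem_socle_iff.1 hs j hj]; exact zero_mem _
  let ψ (I : P) : P :=
    have := I.2
    ⟨⟨(socle A A * I).colon (socle A A), jacobson_le_colon I⟩, inferInstance⟩
  have hψ : StrictMono ψ := fun I I' hlt ↦ by
    have := I'.2
    refine lt_of_le_not_ge (Submodule.colon_mono (Ideal.mul_mono_right hlt.le) le_rfl) fun hle ↦ ?_
    exact hlt.not_ge (le_of_socle_mul_colon_socle_le hA hess I.1.2 hle)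
  let J : P := ⟨⟨Ring.jacobson A, Set.self_mem_Ici⟩, inferInstance⟩
  have hJ : leftAnnihilator (socle A A : Set A) ≤ (ψ J : Ideal A) := fun c hc ↦
    Submodule.mem_colon.2 fun s hs ↦ by rw [smul_eq_mul, hc s hs]; exact zero_mem _
  have hfix : J = ψ J :=
    (show J ≤ ψ J from jacobson_le_colon _).eq_of_not_lt (not_lt_map_of_strictMono hψ J)
  exact le_antisymm (hJ.trans (congrArg (fun I : P ↦ (I : Ideal A)) hfix).ge)
    fun j hj s hs ↦ mem_socle_iff.1 hs j hj

lemma leftAnnihilator_rightAnnihilator (hA : Module.Baer A A)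
    (hess : ∀ I : Ideal A, Disjoint I (socle A A) → I = ⊥) {L : Ideal A}
    (hL : Ring.jacobson A ≤ L) :
    leftAnnihilator (rightAnnihilator (L : Set A) : Set A) = L := by
  refine le_antisymm (fun c hc ↦ ?_) fun a ha x hx ↦ hx a ha
  obtain ⟨e, he, h⟩ := exists_mem_forall_mul_one_sub_mem_jacobson L
  have hmem : c * (1 - e) ∈ Ring.jacobson A := by
    rw [← leftAnnihilator_socle hA hess]
    refine fun s hs ↦ ?_
    rw [mul_assoc]
    refine hc _ fun a ha ↦ ?_
    rw [← mul_assoc]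
    exact mem_socle_iff.1 hs _ (h a ha)
  rw [show c = c * (1 - e) + c * e by noncomm_ring]
  exact add_mem (hL hmem) (L.mul_mem_left c he)

lemma exists_mul_ne_zero_mul_mem_socle (hA : Module.Baer A A)
    (hess : ∀ I : Ideal A, Disjoint I (socle A A) → I = ⊥) {z : A} (hz : z ≠ 0) :
    ∃ a, z * a ≠ 0 ∧ z * a ∈ socle A A := by
  let L := leftAnnihilator {z} ⊔ Ring.jacobson A
  have hLtop : L ≠ ⊤ := fun htop ↦ by
    obtain ⟨u, hu, j, hj, huj⟩ := Submodule.mem_sup.1 ((Ideal.eq_top_iff_one L).1 htop)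
    have hunit := isUnit_one_sub_of_mem_jacobson hj
    rw [← eq_sub_of_add_eq huj] at hunit
    exact hz (hunit.mul_right_eq_zero.1 (hu z rfl))
  have hbot : rightAnnihilator (L : Set A) ≠ ⊥ := fun hbot ↦ hLtop <| by
    rw [← leftAnnihilator_rightAnnihilator hA hess (L := L) le_sup_right, hbot,
      Ideal.eq_top_iff_one]
    rintro x rfl
    exact mul_zero 1
  obtain ⟨y, hy, hy0⟩ := Submodule.exists_mem_ne_zero_of_ne_bot hbot
  obtain ⟨a, rfl⟩ : ∃ a, z * a = y := exists_smul_eq_of_baer hA fun c hc ↦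
    hy c (le_sup_left (a := leftAnnihilator {z}) fun x hx ↦ hx ▸ hc)
  exact ⟨a, hy0, mem_socle_iff.2 fun j hj ↦ hy j (le_sup_right (a := leftAnnihilator {z}) hj)⟩

lemma mem_socle_op_iff (hA : Module.Baer A A)
    (hess : ∀ I : Ideal A, Disjoint I (socle A A) → I = ⊥) {x : A} :
    x ∈ socle Aᵐᵒᵖ A ↔ x ∈ socle A A := by
  refine ⟨socle_induction (zero_mem _) (fun _ _ ↦ add_mem) fun y hy ↦ ?_,
    mem_socle_op_of_mem_socle hA⟩
  obtain ⟨hy0, hy⟩ := isSimpleModule_span_singleton_iff.1 hy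
  obtain ⟨a, ha, haS⟩ := exists_mul_ne_zero_mul_mem_socle hA hess hy0
  obtain ⟨d, hd⟩ := hy (MulOpposite.op a) ha
  exact hd ▸ Ideal.mul_mem_right d.unop (socle A A) haS

/-- Left ideals containing the Jacobson radical correspond to left submodules of the left socle
`S` by `L ↦ S * L`. -/
noncomputable def socleMulOrderIso (hA : Module.Baer A A)
    (hess : ∀ I : Ideal A, Disjoint I (socle A A) → I = ⊥) :
    Set.Ici (Ring.jacobson A) ≃o Set.Iic (socle A A) :=
  RelIso.ofSurjective
    (OrderEmbedding.ofMapLEIff (fun L ↦ ⟨socle A A * (L : Ideal A), Ideal.mul_le_left⟩)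
      fun L L' ↦ ⟨le_of_socle_mul_le hA hess L'.2, Ideal.mul_mono_right⟩)
    fun T ↦ by
      obtain ⟨e, heT, he⟩ := exists_left_projection hA T.2
      refine ⟨⟨Ideal.span {e} ⊔ Ring.jacobson A, Set.mem_Ici.2 le_sup_right⟩,
        Subtype.ext (le_antisymm ?_ ?_)⟩
      · refine Ideal.mul_le.2 fun s hs a ha ↦ ?_
        obtain ⟨b, hb, j, hj, rfl⟩ := Submodule.mem_sup.1 ha
        obtain ⟨c, rfl⟩ := Ideal.mem_span_singleton'.1 hb
        rw [mul_add, mul_eq_zero_of_mem_socle_of_mem_jacobson hA hs hj, add_zero, ← mul_assoc]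
        exact heT _ (Ideal.mul_mem_right c _ hs)
      · intro x hx
        rw [← he x hx]
        exact Ideal.mul_mem_mul (T.2 hx) (Ideal.mem_sup_left (Ideal.mem_span_singleton_self e))

/-- Left ideals containing the Jacobson radical correspond to right submodules of the right socle
by `L ↦ rightAnnihilator L`, with inclusions reversed. -/
def rightAnnihilatorOrderIso (hA : Module.Baer A A)
    (hess : ∀ I : Ideal A, Disjoint I (socle A A) → I = ⊥) :
    (Set.Ici (Ring.jacobson A))ᵒᵈ ≃o Set.Iic (socle Aᵐᵒᵖ A) where
  toFun L := ⟨rightAnnihilator (L.ofDual : Ideal A), fun _ hx ↦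
    mem_socle_op_of_mem_socle hA <| mem_socle_iff.2 fun j hj ↦ hx j (L.ofDual.2 hj)⟩
  invFun T := OrderDual.toDual ⟨leftAnnihilator (T : Submodule Aᵐᵒᵖ A), fun j hj _ hx ↦
    mem_socle_iff.1 ((mem_socle_op_iff hA hess).1 (T.2 hx)) j hj⟩
  left_inv L := Subtype.ext (leftAnnihilator_rightAnnihilator hA hess L.ofDual.2)
  right_inv T := Subtype.ext <|
    rightAnnihilator_leftAnnihilator hA fun _ hx ↦ (mem_socle_op_iff hA hess).1 (T.2 hx)
  map_rel_iff' {L _} := ⟨fun h a ha ↦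
    (leftAnnihilator_rightAnnihilator hA hess L.ofDual.2).le fun _ hx ↦ h hx a ha,
    fun h _ hx a ha ↦ hx a (h ha)⟩

end PseudoFrobenius

theorem socle_left_eq_right_of_selfinjective_semiprimary_general
    {A : Type*} [Ring A] [IsSemisimpleRing (A ⧸ Ring.jacobson A)] (hA : Module.Baer A A)
    (hess : ∀ I : Ideal A, Disjoint I (socle A A) → I = ⊥) :
    (∀ x : A, x ∈ socle Aᵐᵒᵖ A ↔ x ∈ socle A A) ∧
    (socle Aᵐᵒᵖ A).FG ∧
    moduleLength A (socle A A) = moduleLength Aᵐᵒᵖ (socle Aᵐᵒᵖ A) := by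
  let ρ := rightAnnihilatorOrderIso hA hess
  have : WellFoundedGT (Set.Iic (socle Aᵐᵒᵖ A)) := ρ.symm.toOrderEmbedding.wellFoundedGT
  refine ⟨fun _ ↦ mem_socle_op_iff hA hess, fg_of_wellFoundedGT_Iic _, ?_⟩
  rw [moduleLength_coe, moduleLength_coe, ← Order.krullDim_eq_of_orderIso ρ,
    Order.krullDim_orderDual, Order.krullDim_eq_of_orderIso (socleMulOrderIso hA hess)]

/-- For a left self-injective semiprimary ring `A`, the right socle of `A` coincides with
the left socle, it is finitely generated as a right `A`-module, and its length as a left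
`A`-module equals its length as a right `A`-module. -/
theorem socle_left_eq_right_of_selfinjective_semiprimary
    (A : Type u) [Ring A] (hsp : IsSemiprimary A) (hinj : Module.Injective A A) :
    (∀ x : A, x ∈ socle Aᵐᵒᵖ A ↔ x ∈ socle A A) ∧
    (socle Aᵐᵒᵖ A).FG ∧
    moduleLength A (socle A A) = moduleLength Aᵐᵒᵖ (socle Aᵐᵒᵖ A) := by
  have := hsp.isSemiprimaryRing_s7
  exact socle_left_eq_right_of_selfinjective_semiprimary_general (Module.Baer.of_injective hinj)
    fun _ ↦ eq_bot_of_disjoint_socle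
end
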